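/- For every integer n ≠ 0, the iterated integral 2π · ∫₀^∞ r·e^{−r²} · ( ∫₀^∞ e^{−r²·cosh(t)} · [ (2n−1)/(t² + (2n−1)²π²) − (2n+1)/(t² + (2n+1)²π²) ] dt ) dr equals 1/(2π·n²). -/

import Mathlib

open Real MeasureTheory

/-!
Put `w(t) = 1 / (1 + cosh t)`. Integrating first over the Gaussian radius turns the double integral
into `1/2 ∫₀^∞ w(t) k(t) dt`, where `k` is the bracket of Yor's formula. Since `k` is even in `n`,
let `n > 0`. Then `k` is `1/π` times the cosine transform of `2 e^{-2πns} sinh(πs)`, and the cosine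
transform of `w` is `πs / sinh(πs)`: under the substitution `x = 1 / (1 + e^{-t})` it is the Beta
integral `B(1 + is, 1 - is)`. Moving the transform onto `w` by Fubini's theorem, the factors
`sinh(πs)` cancel and what is left is `2 ∫₀^∞ s e^{-2πns} ds = 1 / (2π²n²)`.
-/

section Sigmoid

lemma one_add_cosh_pos (t : ℝ) : 0 < 1 + cosh t := by
  linarith [cosh_pos t]

lemma sigmoid_mul_one_sub_sigmoid (t : ℝ) :
    sigmoid t * (1 - sigmoid t) = (1 + cosh t)⁻¹ / 2 := by
  rw [sigmoid_def, cosh_eq, exp_neg]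
  have := exp_pos t
  field_simp
  ring

lemma log_sigmoid_sub_log_one_sub_sigmoid (t : ℝ) :
    log (sigmoid t) - log (1 - sigmoid t) = t := by
  rw [← sigmoid_neg, ← sigmoid_mul_rexp_neg, log_mul (sigmoid_pos t).ne' (exp_pos _).ne', log_exp]
  ring

lemma cpow_sigmoid_mul_cpow_one_sub_sigmoid (z : ℂ) (t : ℝ) :
    (sigmoid t : ℂ) ^ z * (1 - (sigmoid t : ℂ)) ^ (-z) = Complex.exp (z * t) := by
  have hpos : 0 < sigmoid t := sigmoid_pos t
  have hpos' : 0 < 1 - sigmoid t := sub_pos.2 (sigmoid_lt_one t)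
  have hlog : (log (sigmoid t) - log (1 - sigmoid t) : ℂ) = t :=
    mod_cast log_sigmoid_sub_log_one_sub_sigmoid t
  have hcast : (1 - (sigmoid t : ℂ)) = ((1 - sigmoid t : ℝ) : ℂ) := by push_cast; rfl
  rw [hcast, Complex.cpow_def_of_ne_zero (mod_cast hpos.ne'),
    Complex.cpow_def_of_ne_zero (mod_cast hpos'.ne'), ← Complex.ofReal_log hpos.le,
    ← Complex.ofReal_log hpos'.le, ← Complex.exp_add, ← hlog]
  congr 1
  ring

lemma abs_deriv_sigmoid (t : ℝ) : |sigmoid t * (1 - sigmoid t)| = (1 + cosh t)⁻¹ / 2 := by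
  have := one_add_cosh_pos t
  rw [sigmoid_mul_one_sub_sigmoid, abs_of_pos (by positivity)]

variable {E : Type*} [NormedAddCommGroup E] [NormedSpace ℝ E]

lemma integrableOn_Ioo_zero_one_iff_integrable_comp_sigmoid (f : ℝ → E) :
    IntegrableOn f (Set.Ioo 0 1) ↔
      Integrable fun t : ℝ => ((1 + cosh t)⁻¹ / 2) • f (sigmoid t) := by
  have h := integrableOn_image_iff_integrableOn_abs_deriv_smul MeasurableSet.univ
    (fun t _ => (hasDerivAt_sigmoid t).hasDerivWithinAt) sigmoid_injective.injOn f
  simpa only [Set.image_univ, range_sigmoid, integrableOn_univ, abs_deriv_sigmoid] using h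

lemma integral_Ioo_zero_one_eq_integral_comp_sigmoid (f : ℝ → E) :
    ∫ x in Set.Ioo 0 1, f x = ∫ t : ℝ, ((1 + cosh t)⁻¹ / 2) • f (sigmoid t) := by
  have h := integral_image_eq_integral_abs_deriv_smul MeasurableSet.univ
    (fun t _ => (hasDerivAt_sigmoid t).hasDerivWithinAt) sigmoid_injective.injOn f
  simpa only [Set.image_univ, range_sigmoid, Measure.restrict_univ, abs_deriv_sigmoid] using h

lemma integrable_inv_one_add_cosh : Integrable fun t : ℝ => (1 + cosh t)⁻¹ := by
  have hone : IntegrableOn (fun _ : ℝ => (2 : ℝ)) (Set.Ioo 0 1) := by simp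
  simpa using (integrableOn_Ioo_zero_one_iff_integrable_comp_sigmoid _).1 hone

end Sigmoid

section BetaIntegral

lemma betaIntegral_one_add_one_sub {z : ℂ} (hz : z ≠ 0) (hre : |z.re| < 1) :
    Complex.betaIntegral (1 + z) (1 - z) = π * z / Complex.sin (π * z) := by
  obtain ⟨hre_left, hre_right⟩ := abs_lt.1 hre
  have hGamma := Complex.Gamma_mul_Gamma_eq_betaIntegral (s := 1 + z) (t := 1 - z)
    (by simp; linarith) (by simpa using hre_right)
  have hGamma_two : Complex.Gamma (1 + z + (1 - z)) = 1 := by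
    rw [show 1 + z + (1 - z) = 2 by ring, Complex.Gamma_ofNat_eq_factorial 1, Nat.factorial_one,
      Nat.cast_one]
  rw [hGamma_two, one_mul, add_comm 1 z, Complex.Gamma_add_one z hz, mul_assoc,
    Complex.Gamma_mul_Gamma_one_sub, add_comm z 1] at hGamma
  rw [← hGamma]
  ring

lemma integral_inv_one_add_cosh_mul_cexp {z : ℂ} (hz : z ≠ 0) (hre : |z.re| < 1) :
    ∫ t : ℝ, ((1 + cosh t)⁻¹ : ℝ) * Complex.exp (z * t) = 2 * π * z / Complex.sin (π * z) := by
  have hbeta := betaIntegral_one_add_one_sub hz hre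
  rw [Complex.betaIntegral, intervalIntegral.integral_of_le zero_le_one,
    integral_Ioc_eq_integral_Ioo, integral_Ioo_zero_one_eq_integral_comp_sigmoid] at hbeta
  simp only [add_sub_cancel_left, show 1 - z - 1 = -z by ring,
    cpow_sigmoid_mul_cpow_one_sub_sigmoid, Complex.real_smul] at hbeta
  rw [show 2 * π * z / Complex.sin (π * z) = 2 * (π * z / Complex.sin (π * z)) by ring, ← hbeta,
    ← integral_const_mul]
  congr 1 with t
  push_cast
  ring

end BetaIntegral

section CosineTransform

/-- The cosine transform `t ↦ ∫₀^∞ f(s) cos(ts) ds` on the half-line, without normalizing factor. -/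
noncomputable def cosineTransform (f : ℝ → ℝ) (t : ℝ) : ℝ :=
  ∫ s in Set.Ioi 0, f s * cos (t * s)

lemma integrable_mul_cos {f : ℝ → ℝ} {μ : Measure ℝ} (hf : Integrable f μ) (t : ℝ) :
    Integrable (fun s => f s * cos (t * s)) μ :=
  hf.mul_bdd (c := 1) (by fun_prop) (.of_forall fun _ => abs_cos_le_one _)

lemma cosineTransform_sub {f g : ℝ → ℝ} (hf : IntegrableOn f (Set.Ioi 0))
    (hg : IntegrableOn g (Set.Ioi 0)) (t : ℝ) :
    cosineTransform (fun s => f s - g s) t = cosineTransform f t - cosineTransform g t := by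
  simp only [cosineTransform, sub_mul]
  exact integral_sub (integrable_mul_cos hf t) (integrable_mul_cos hg t)

section Fubini

variable {u v : ℝ → ℝ} (hu : IntegrableOn u (Set.Ioi 0)) (hv : IntegrableOn v (Set.Ioi 0))
include hu hv

lemma integrable_prod_mul_mul_cos :
    Integrable (fun p : ℝ × ℝ => u p.1 * (v p.2 * cos (p.1 * p.2)))
      ((volume.restrict (Set.Ioi 0)).prod (volume.restrict (Set.Ioi 0))) := by
  simp only [← mul_assoc]
  exact (hu.mul_prod hv).mul_bdd (c := 1) (by fun_prop) (.of_forall fun _ => abs_cos_le_one _)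

lemma integrableOn_mul_cosineTransform :
    IntegrableOn (fun t => u t * cosineTransform v t) (Set.Ioi 0) := by
  simpa only [integral_const_mul, cosineTransform, IntegrableOn] using
    (integrable_prod_mul_mul_cos hu hv).integral_prod_left

lemma integral_mul_cosineTransform_comm :
    ∫ t in Set.Ioi 0, u t * cosineTransform v t = ∫ s in Set.Ioi 0, v s * cosineTransform u s := by
  simp only [cosineTransform, ← integral_const_mul]
  rw [integral_integral_swap (integrable_prod_mul_mul_cos hu hv)]
  congr with s
  congr with t
  rw [mul_left_comm, mul_comm t s]

end Fubini

lemma integrableOn_exp_neg_mul {a : ℝ} (ha : 0 < a) :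
    IntegrableOn (fun s => exp (-a * s)) (Set.Ioi 0) :=
  integrableOn_exp_mul_Ioi (neg_lt_zero.2 ha) 0

lemma cosineTransform_exp_neg_mul {a : ℝ} (ha : 0 < a) (t : ℝ) :
    cosineTransform (fun s => exp (-a * s)) t = a / (t ^ 2 + a ^ 2) := by
  set c : ℂ := -a + t * Complex.I with hc
  have hc_re : c.re = -a := by simp [hc]
  have hc_normSq : Complex.normSq c = t ^ 2 + a ^ 2 := by
    rw [hc, ← Complex.ofReal_neg, Complex.normSq_add_mul_I, neg_sq, add_comm]
  have hc_neg : c.re < 0 := hc_re ▸ neg_lt_zero.2 ha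
  have hexp_re (s : ℝ) : (Complex.exp (c * s)).re = exp (-a * s) * cos (t * s) := by
    simp [Complex.exp_re, hc]
  have hre := integral_re (integrableOn_exp_mul_complex_Ioi hc_neg 0)
  simp only [RCLike.re_to_complex, hexp_re, integral_exp_mul_complex_Ioi hc_neg] at hre
  rw [cosineTransform, hre]
  simp [Complex.div_re, hc_re, hc_normSq]

lemma cosineTransform_inv_one_add_cosh {s : ℝ} (hs : s ≠ 0) :
    cosineTransform (fun t => (1 + cosh t)⁻¹) s = π * s / sinh (π * s) := by
  have hint : Integrable fun t : ℝ =>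
      ((1 + cosh t)⁻¹ : ℝ) * Complex.exp (s * Complex.I * t) :=
    integrable_inv_one_add_cosh.ofReal.mul_bdd (c := 1) (by fun_prop)
      (.of_forall fun t => by simp [Complex.norm_exp])
  have hre (t : ℝ) : (((1 + cosh t)⁻¹ : ℝ) * Complex.exp (s * Complex.I * t)).re
      = (1 + cosh |t|)⁻¹ * cos (s * |t|) := by
    have hcos : cos (s * |t|) = cos (s * t) := by
      rw [← cos_abs, abs_mul, abs_abs, ← abs_mul, cos_abs]
    rw [cosh_abs, hcos, show (s * Complex.I * t : ℂ) = (s * t : ℝ) * Complex.I by push_cast; ring,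
      Complex.re_ofReal_mul, Complex.exp_ofReal_mul_I_re]
  have hvalue : 2 * π * (s * Complex.I) / Complex.sin (π * (s * Complex.I))
      = (2 * (π * s / sinh (π * s)) : ℝ) := by
    rw [← mul_assoc (π : ℂ), Complex.sin_mul_I, ← mul_assoc (2 * π : ℂ),
      mul_div_mul_right _ _ Complex.I_ne_zero]
    push_cast
    ring
  have hreal := integral_re hint
  simp only [RCLike.re_to_complex, hre] at hreal
  rw [integral_inv_one_add_cosh_mul_cexp (by simpa using hs) (by simp), hvalue, Complex.ofReal_re,
    integral_comp_abs (f := fun t => (1 + cosh t)⁻¹ * cos (s * t))] at hreal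
  exact mul_left_cancel₀ two_ne_zero hreal

end CosineTransform

lemma integral_mul_exp_neg_mul_Ioi {c : ℝ} (hc : 0 < c) :
    ∫ s in Set.Ioi 0, s * exp (-(c * s)) = 1 / c ^ 2 := by
  have h := integral_rpow_mul_exp_neg_mul_Ioi two_pos hc
  simpa only [show (2 : ℝ) - 1 = 1 by norm_num, rpow_one, rpow_two, Gamma_two, mul_one, div_pow,
    one_pow] using h

section RadialIntegral

lemma integral_mul_exp_neg_mul_sq_Ioi {b : ℝ} (hb : 0 < b) :
    ∫ r in Set.Ioi 0, r * exp (-b * r ^ 2) = (2 * b)⁻¹ := by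
  rw [← Complex.ofReal_inj, ← integral_complex_ofReal]
  push_cast
  exact integral_mul_cexp_neg_mul_sq (by simpa using hb)

variable {α : Type*} [MeasurableSpace α] {μ : Measure α} [SFinite μ]
  {E : Type*} [NormedAddCommGroup E] [NormedSpace ℝ E] {f : α → E} {g : α → ℝ}
  (hg_pos : ∀ x, 0 < g x) (hg : AEMeasurable g μ) (hfg : Integrable (fun x => (g x)⁻¹ • f x) μ)
include hg_pos hg hfg

lemma integrable_prod_mul_exp_neg_mul_sq_smul :
    Integrable (fun p : ℝ × α => (p.1 * exp (-g p.2 * p.1 ^ 2)) • f p.2)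
      ((volume.restrict (Set.Ioi 0)).prod μ) := by
  have hf : AEStronglyMeasurable f μ :=
    (hg.aestronglyMeasurable.smul hfg.aestronglyMeasurable).congr
      (.of_forall fun x => smul_inv_smul₀ (hg_pos x).ne' (f x))
  have hnorm (x : α) : ∫ r in Set.Ioi 0, ‖(r * exp (-g x * r ^ 2)) • f x‖
      = 2⁻¹ * ‖(g x)⁻¹ • f x‖ := by
    have habs : ∀ r ∈ Set.Ioi (0 : ℝ),
        ‖(r * exp (-g x * r ^ 2)) • f x‖ = r * exp (-g x * r ^ 2) * ‖f x‖ := fun r hr => by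
      rw [norm_smul, norm_of_nonneg (mul_nonneg (le_of_lt hr) (exp_pos _).le)]
    rw [setIntegral_congr_fun measurableSet_Ioi habs, integral_mul_const,
      integral_mul_exp_neg_mul_sq_Ioi (hg_pos x), norm_smul,
      norm_of_nonneg (inv_nonneg.2 (hg_pos x).le), mul_inv, mul_assoc]
  have hweight : AEMeasurable (fun p : ℝ × α => p.1 * exp (-g p.2 * p.1 ^ 2))
      ((volume.restrict (Set.Ioi 0)).prod μ) :=
    measurable_fst.aemeasurable.mul
      (hg.comp_snd.neg.mul (measurable_fst.pow_const 2).aemeasurable).exp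
  refine (integrable_prod_iff' (hweight.aestronglyMeasurable.smul hf.comp_snd)).2
    ⟨.of_forall fun x => (integrable_mul_exp_neg_mul_sq (hg_pos x)).integrableOn.smul_const (f x),
      (hfg.norm.const_mul 2⁻¹).congr (.of_forall fun x => (hnorm x).symm)⟩

lemma integral_smul_integral_exp_neg_mul_sq_smul [CompleteSpace E] :
    ∫ r in Set.Ioi (0 : ℝ), r • ∫ x, exp (-g x * r ^ 2) • f x ∂μ
      = (2 : ℝ)⁻¹ • ∫ x, (g x)⁻¹ • f x ∂μ := by
  simp only [← integral_smul, smul_smul]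
  rw [integral_integral_swap (integrable_prod_mul_exp_neg_mul_sq_smul hg_pos hg hfg)]
  congr with x
  rw [integral_smul_const, integral_mul_exp_neg_mul_sq_Ioi (hg_pos x), mul_inv]

end RadialIntegral

lemma integral_mul_exp_neg_sq_mul_integral_exp_neg_sq_mul_cosh {f : ℝ → ℝ} {s : Set ℝ}
    (hf : IntegrableOn (fun t => (1 + cosh t)⁻¹ * f t) s) :
    ∫ r in Set.Ioi 0, r * exp (-r ^ 2) * ∫ t in s, exp (-r ^ 2 * cosh t) * f t
      = 2⁻¹ * ∫ t in s, (1 + cosh t)⁻¹ * f t := by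
  have hexp (r t : ℝ) : exp (-(1 + cosh t) * r ^ 2) = exp (-r ^ 2) * exp (-r ^ 2 * cosh t) := by
    rw [← exp_add]
    ring_nf
  have hradial := integral_smul_integral_exp_neg_mul_sq_smul one_add_cosh_pos (by fun_prop) hf
  simpa only [smul_eq_mul, hexp, mul_assoc, integral_const_mul] using hradial

section WindingKernel

/-- The bracket of Yor's formula for the law of the index of a planar Brownian loop, with the
winding number replaced by a real parameter `x`. -/
noncomputable def windingKernel (x t : ℝ) : ℝ :=
  (2 * x - 1) / (t ^ 2 + (2 * x - 1) ^ 2 * π ^ 2)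
    - (2 * x + 1) / (t ^ 2 + (2 * x + 1) ^ 2 * π ^ 2)

lemma windingKernel_neg (x t : ℝ) : windingKernel (-x) t = windingKernel x t := by
  rw [windingKernel, windingKernel, show 2 * -x - 1 = -(2 * x + 1) by ring,
    show 2 * -x + 1 = -(2 * x - 1) by ring, neg_sq, neg_sq]
  ring

lemma windingKernel_abs (x t : ℝ) : windingKernel |x| t = windingKernel x t := by
  obtain h | h := abs_choice x <;> simp only [h, windingKernel_neg]

/-- The function whose cosine transform is `π` times `windingKernel x`, when `1 / 2 < x`. -/
noncomputable def windingSpectrum (x s : ℝ) : ℝ :=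
  exp (-((2 * x - 1) * π) * s) - exp (-((2 * x + 1) * π) * s)

lemma windingSpectrum_eq (x s : ℝ) :
    windingSpectrum x s = 2 * exp (-(2 * π * x * s)) * sinh (π * s) := by
  have hsub : -((2 * x - 1) * π) * s = -(2 * π * x * s) + π * s := by ring
  have hadd : -((2 * x + 1) * π) * s = -(2 * π * x * s) + -(π * s) := by ring
  rw [windingSpectrum, hsub, hadd, exp_add, exp_add, sinh_eq]
  ring

section

variable {x : ℝ} (hx : 1 / 2 < x)
include hx

lemma integrableOn_windingSpectrum : IntegrableOn (windingSpectrum x) (Set.Ioi 0) :=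
  (integrableOn_exp_neg_mul (mul_pos (by linarith) pi_pos)).sub
    (integrableOn_exp_neg_mul (mul_pos (by linarith) pi_pos))

lemma cosineTransform_windingSpectrum (t : ℝ) :
    cosineTransform (windingSpectrum x) t = π * windingKernel x t := by
  have hsub : 0 < (2 * x - 1) * π := mul_pos (by linarith) pi_pos
  have hadd : 0 < (2 * x + 1) * π := mul_pos (by linarith) pi_pos
  unfold windingSpectrum
  rw [cosineTransform_sub (integrableOn_exp_neg_mul hsub) (integrableOn_exp_neg_mul hadd),
    cosineTransform_exp_neg_mul hsub, cosineTransform_exp_neg_mul hadd, windingKernel]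
  ring

lemma windingKernel_eq_cosineTransform (t : ℝ) :
    windingKernel x t = π⁻¹ * cosineTransform (windingSpectrum x) t := by
  rw [cosineTransform_windingSpectrum hx, inv_mul_cancel_left₀ pi_ne_zero]

lemma integrableOn_inv_one_add_cosh_mul_windingKernel :
    IntegrableOn (fun t => (1 + cosh t)⁻¹ * windingKernel x t) (Set.Ioi 0) := by
  simp only [windingKernel_eq_cosineTransform hx, mul_left_comm _ π⁻¹]
  exact (integrableOn_mul_cosineTransform integrable_inv_one_add_cosh.integrableOn
    (integrableOn_windingSpectrum hx)).const_mul _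

end

lemma windingSpectrum_mul_cosineTransform_inv_one_add_cosh (x : ℝ) {s : ℝ} (hs : s ≠ 0) :
    windingSpectrum x s * cosineTransform (fun t => (1 + cosh t)⁻¹) s
      = 2 * π * (s * exp (-(2 * π * x * s))) := by
  have hsinh : sinh (π * s) ≠ 0 := sinh_ne_zero.2 (mul_ne_zero pi_ne_zero hs)
  rw [windingSpectrum_eq, cosineTransform_inv_one_add_cosh hs]
  field_simp

lemma integral_inv_one_add_cosh_mul_windingKernel {x : ℝ} (hx : 1 / 2 < x) :
    ∫ t in Set.Ioi 0, (1 + cosh t)⁻¹ * windingKernel x t = 1 / (2 * π ^ 2 * x ^ 2) := by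
  have hrate : 0 < 2 * π * x := mul_pos two_pi_pos (by linarith)
  calc ∫ t in Set.Ioi 0, (1 + cosh t)⁻¹ * windingKernel x t
      = π⁻¹ * ∫ t in Set.Ioi 0, (1 + cosh t)⁻¹ * cosineTransform (windingSpectrum x) t := by
        simp only [windingKernel_eq_cosineTransform hx, mul_left_comm _ π⁻¹, integral_const_mul]
    _ = π⁻¹ * ∫ s in Set.Ioi 0,
          windingSpectrum x s * cosineTransform (fun t => (1 + cosh t)⁻¹) s := by
        rw [integral_mul_cosineTransform_comm integrable_inv_one_add_cosh.integrableOn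
          (integrableOn_windingSpectrum hx)]
    _ = π⁻¹ * ∫ s in Set.Ioi 0, 2 * π * (s * exp (-(2 * π * x * s))) := by
        congr 1
        exact setIntegral_congr_fun measurableSet_Ioi fun s hs =>
          windingSpectrum_mul_cosineTransform_inv_one_add_cosh x (ne_of_gt hs)
    _ = 1 / (2 * π ^ 2 * x ^ 2) := by
        rw [integral_const_mul, integral_mul_exp_neg_mul_Ioi hrate]
        field_simp

end WindingKernel

theorem iterated_integral_winding_area_general {x : ℝ} (hx : 1 / 2 < |x|) :
    2 * π * ∫ r in Set.Ioi (0 : ℝ), r * exp (-r ^ 2) *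
        ∫ t in Set.Ioi (0 : ℝ), exp (-r ^ 2 * cosh t) * windingKernel x t
      = 1 / (2 * π * x ^ 2) := by
  simp only [← windingKernel_abs x, ← sq_abs x]
  rw [integral_mul_exp_neg_sq_mul_integral_exp_neg_sq_mul_cosh
      (integrableOn_inv_one_add_cosh_mul_windingKernel hx),
    integral_inv_one_add_cosh_mul_windingKernel hx]
  field_simp

/-- For every integer `n ≠ 0`, the iterated integral (in polar coordinates, from
Yor's formula for the law of the index of a planar Brownian loop)
`2π ∫₀^∞ r e^{-r²} ( ∫₀^∞ e^{-r² cosh t} [ (2n-1)/(t² + (2n-1)²π²) - (2n+1)/(t² + (2n+1)²π²) ] dt ) dr`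
equals `1/(2π n²)`. -/
theorem iterated_integral_winding_area (n : ℤ) (hn : n ≠ 0) :
    2 * π * ∫ r in Set.Ioi (0 : ℝ), r * Real.exp (-r ^ 2) *
        ∫ t in Set.Ioi (0 : ℝ), Real.exp (-r ^ 2 * Real.cosh t) *
          ((2 * (n : ℝ) - 1) / (t ^ 2 + (2 * (n : ℝ) - 1) ^ 2 * π ^ 2)
            - (2 * (n : ℝ) + 1) / (t ^ 2 + (2 * (n : ℝ) + 1) ^ 2 * π ^ 2))
      = 1 / (2 * π * (n : ℝ) ^ 2) := by
  have hn_abs : (1 : ℝ) ≤ |(n : ℝ)| := mod_cast Int.one_le_abs hn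
  exact iterated_integral_winding_area_general (one_half_lt_one.trans_le hn_abs)
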